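/- (Lemma 3.2) Assume the integrality condition on (μ,ν). For every j ∈ ℕ, the function Λ_j^{μ,ν} belongs to L¹(ℝ_+, x^{μ+ν+1}dx) and ∫₀^∞ Λ_j^{μ,ν}(x) x^{μ+ν+1} dx = (−1)^j · 2^{μ+ν} Γ(j+(μ+ν+2)/2)/j!. -/

import Mathlib

open MeasureTheory Real Filter Set Metric

noncomputable section

/-- Normalized Bessel function of the first kind: `J̃_α(x) = (x/2)^{-α} J_α(x)`,
given by its (entire) power series. -/
def besselJt (α x : ℝ) : ℝ :=
  ∑' m : ℕ, (-1) ^ m / (m.factorial * Real.Gamma (m + α + 1)) * (x / 2) ^ (2 * m)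

/-- Bessel function of the first kind `J_α`. -/
def besselJ (α x : ℝ) : ℝ :=
  ∑' m : ℕ, (-1) ^ m / (m.factorial * Real.Gamma (m + α + 1)) * (x / 2) ^ (2 * (m : ℝ) + α)

/-- Normalized modified Bessel function `Ĩ_α(x) = (x/2)^{-α} I_α(x)`,
given by its (entire, even) power series. -/
def besselIt (α x : ℝ) : ℝ :=
  ∑' m : ℕ, (x / 2) ^ (2 * m) / (m.factorial * Real.Gamma (m + α + 1))

/-- Modified Bessel function of the first kind `I_α`. -/
def besselI (α x : ℝ) : ℝ :=
  ∑' m : ℕ, (x / 2) ^ (2 * (m : ℝ) + α) / (m.factorial * Real.Gamma (m + α + 1))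

/-- Modified Bessel function of the second kind,
`K_α(x) = lim_{β→α} (π/2)(I_{−β}(x) − I_β(x))/sin(βπ)`. -/
def besselK (α x : ℝ) : ℝ :=
  limUnder (nhdsWithin α {α}ᶜ) fun β =>
    Real.pi / 2 * (besselI (-β) x - besselI β x) / Real.sin (β * Real.pi)

/-- Normalized K-Bessel function `K̃_α(x) = (x/2)^{-α} K_α(x)`. -/
def besselKt (α x : ℝ) : ℝ := (x / 2) ^ (-α) * besselK α x

/-- Normalized Gegenbauer polynomial `C̃_n^λ = Γ(λ) C_n^λ`, where `C_n^λ` is defined via the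
generating function `(1 − 2xt + t²)^{−λ} = Σ_{n≥0} C_n^λ(x) tⁿ`; explicitly,
`C̃_n^λ(x) = Σ_{k=0}^{⌊n/2⌋} (−1)^k Γ(λ+n−k)/(k!(n−2k)!) (2x)^{n−2k}`.
This expression also gives the limit value `C̃_n^0 = lim_{λ→0+} Γ(λ) C_n^λ` for `n ≥ 1`. -/
def gegenbauerCt (n : ℕ) (l x : ℝ) : ℝ :=
  ∑ k ∈ Finset.range (n / 2 + 1),
    (-1) ^ k * Real.Gamma (l + n - k) / (k.factorial * (n - 2 * k).factorial)
      * (2 * x) ^ (n - 2 * k)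

/-- Laguerre polynomial `L_n^μ(x) = Σ_{k=0}^n (−1)^k binom(n+μ, n−k) x^k/k!`
(with nonnegative integer parameter `μ`). -/
def laguerreL (n μ : ℕ) (x : ℝ) : ℝ :=
  ∑ k ∈ Finset.range (n + 1),
    (-1) ^ k * (Nat.choose (n + μ) (n - k)) * x ^ k / k.factorial

/-- The Euler operator `θ = x d/dx`. -/
def eulerOp (u : ℝ → ℝ) : ℝ → ℝ := fun x => x * deriv u x

/-- `(θ+c)(θ+c+ν)u − x² u`, i.e. the operator `Q_ν(θ+c)` applied to `u`. -/
def besselQ (ν c : ℝ) (u : ℝ → ℝ) : ℝ → ℝ := fun x =>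
  eulerOp (fun y => eulerOp u y + (c + ν) * u y) x
    + c * (eulerOp u x + (c + ν) * u x) - x ^ 2 * u x

/-- The fourth order differential operator
`D_{μ,ν} = x^{−2}((θ+μ)(θ+μ+ν) − x²)(θ(θ+ν) − x²)`. -/
def Dop (μ ν : ℝ) (u : ℝ → ℝ) : ℝ → ℝ := fun x =>
  besselQ ν μ (besselQ ν 0 u) x / x ^ 2

/-- The generating function
`G^{μ,ν}(t,x) = (1−t)^{−(μ+ν+2)/2} Ĩ_{μ/2}(tx/(1−t)) K̃_{ν/2}(x/(1−t))`. -/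
def genFun (μ ν t x : ℝ) : ℝ :=
  (1 - t) ^ (-(μ + ν + 2) / 2) * besselIt (μ / 2) (t * x / (1 - t))
    * besselKt (ν / 2) (x / (1 - t))

/-- The eigenfunctions `Λ_j^{μ,ν}`, defined as the Taylor coefficients in `t` at `t = 0` of the
generating function `G^{μ,ν}(t,x) = Σ_{j≥0} Λ_j^{μ,ν}(x) t^j`. -/
def LambdaF (μ ν : ℝ) (j : ℕ) (x : ℝ) : ℝ :=
  iteratedDeriv j (fun t => genFun μ ν t x) 0 / j.factorial

/-- The integrality condition: `μ ≥ ν ≥ −1` are integers of the same parity,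
not both equal to `−1`. -/
def IntCond (μ ν : ℤ) : Prop :=
  -1 ≤ ν ∧ ν ≤ μ ∧ Even (μ - ν) ∧ ¬(μ = -1 ∧ ν = -1)

end

/-! ### The entire series `ff a y = ∑ y^m / (m! Γ(m+a+1))` -/

/-- coefficients -/
noncomputable def cf (a : ℝ) (m : ℕ) : ℝ := 1 / (m.factorial * Real.Gamma (m + a + 1))

/-- the entire function `y ↦ ∑ y^m / (m! Γ(m+a+1))` -/
noncomputable def ff (a y : ℝ) : ℝ := ∑' m : ℕ, cf a m * y ^ m

lemma cf_succ (a : ℝ) (m : ℕ) : ((m : ℝ) + 1) * cf a (m + 1) = cf (a + 1) m := by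
  unfold cf
  have h : ((m + 1 : ℕ) : ℝ) + a + 1 = m + (a + 1) + 1 := by push_cast; ring
  rw [h, Nat.factorial_succ]
  push_cast
  have : (m : ℝ) + 1 ≠ 0 := by positivity
  rw [mul_one_div, mul_assoc, div_mul_eq_div_div, div_self this]

lemma cf_pred (a : ℝ) (m : ℕ) : ((m : ℝ) + a) * cf a m = cf (a - 1) m := by
  unfold cf
  have h : (m : ℝ) + (a - 1) + 1 = m + a := by ring
  rw [h]
  by_cases h0 : (m : ℝ) + a = 0
  · rw [h0]; simp
  · rw [Real.Gamma_add_one h0]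
    rw [mul_one_div, mul_left_comm, div_mul_eq_div_div, div_self h0]

lemma cf_abs_summable (a R : ℝ) (hR : 0 < R) : Summable fun m => |cf a m| * R ^ m := by
  have hpos : ∀ᶠ m : ℕ in atTop, 0 < (m : ℝ) + a := by
    have := (tendsto_natCast_atTop_atTop (R := ℝ)).atTop_add (tendsto_const_nhds (x := a))
    exact this.eventually_gt_atTop 0
  have hcpos : ∀ᶠ m : ℕ in atTop, 0 < cf a m := by
    filter_upwards [hpos] with m hm
    unfold cf
    have := Real.Gamma_pos_of_pos (s := (m : ℝ) + a + 1) (by linarith)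
    positivity
  apply summable_of_ratio_test_tendsto_lt_one (l := 0) zero_lt_one
  · filter_upwards [hcpos] with m hm
    have : 0 < |cf a m| := abs_pos.mpr hm.ne'
    positivity
  · have h1 : Tendsto (fun m : ℕ => R / (((m : ℝ) + 1) * ((m : ℝ) + a + 1))) atTop (nhds 0) := by
      apply Tendsto.const_div_atTop
      apply Tendsto.atTop_mul_atTop₀
      · exact (tendsto_natCast_atTop_atTop (R := ℝ)).atTop_add (tendsto_const_nhds (x := (1 : ℝ)))
      · have := (tendsto_natCast_atTop_atTop (R := ℝ)).atTop_add
          (tendsto_const_nhds (x := a + 1))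
        simpa [add_assoc] using this
    refine h1.congr' ?_
    filter_upwards [hpos, hcpos] with m hm hc
    have h2 : cf a (m + 1) = cf a m / (((m : ℝ) + 1) * ((m : ℝ) + a + 1)) := by
      have e1 := cf_succ a m
      have e2 := cf_pred (a + 1) m
      rw [show a + 1 - 1 = a by ring] at e2
      rw [← e2, ← e1]
      have : (m : ℝ) + 1 ≠ 0 := by positivity
      have : (m : ℝ) + a + 1 ≠ 0 := by linarith
      field_simp
      ring
    have hd : 0 < ((m : ℝ) + 1) * ((m : ℝ) + a + 1) :=
      mul_pos (by positivity) (by linarith)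
    rw [h2]
    simp only [norm_mul, Real.norm_eq_abs, abs_div, abs_of_pos hc, abs_of_pos hd,
      abs_pow, abs_of_pos hR]
    field_simp
    ring

lemma cf_summable (a y : ℝ) : Summable fun m => cf a m * y ^ m := by
  apply Summable.of_norm_bounded (cf_abs_summable a (|y| + 1) (by positivity))
  intro m
  rw [norm_mul, norm_pow, Real.norm_eq_abs, Real.norm_eq_abs]
  gcongr
  linarith

lemma cf_summable_nat_mul (a R : ℝ) (hR : 0 < R) :
    Summable fun m : ℕ => |cf a m| * (m * R ^ (m - 1)) := by
  rw [← summable_nat_add_iff 1]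
  refine (cf_abs_summable (a + 1) R hR).congr ?_
  intro m
  rw [← cf_succ, abs_mul, abs_of_nonneg (by positivity : (0 : ℝ) ≤ m + 1)]
  push_cast
  ring

lemma tsum_cf_shift (a y : ℝ) : ∑' m : ℕ, cf a m * (m * y ^ (m - 1)) = ff (a + 1) y := by
  have hs : Summable fun m : ℕ => cf a m * (m * y ^ (m - 1)) := by
    rw [← summable_nat_add_iff 1]
    refine (cf_summable (a + 1) y).congr ?_
    intro m
    rw [← cf_succ]; push_cast; ring
  rw [hs.tsum_eq_zero_add]
  simp only [Nat.cast_zero, zero_mul, mul_zero, zero_add]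
  unfold ff
  congr 1; ext m
  rw [← cf_succ]; push_cast; ring

lemma ff_hasDerivAt (a y : ℝ) : HasDerivAt (ff a) (ff (a + 1) y) y := by
  rw [← tsum_cf_shift]
  have := hasDerivAt_tsum_of_isPreconnected (𝕜 := ℝ) (F := ℝ)
    (g := fun m z => cf a m * z ^ m) (g' := fun m z => cf a m * (m * z ^ (m - 1)))
    (t := Metric.ball 0 (|y| + 1)) (y₀ := y) (y := y)
    (cf_summable_nat_mul a (|y| + 1) (by positivity)) Metric.isOpen_ball
    (convex_ball (0 : ℝ) _).isPreconnected ?_ ?_ ?_ (cf_summable a y) ?_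
  · exact this
  · intro m z _
    exact (hasDerivAt_pow m z).const_mul _
  · intro m z hz
    rw [norm_mul, norm_mul, norm_pow]
    simp only [mem_ball, dist_zero_right] at hz
    simp only [Real.norm_eq_abs, Nat.abs_cast] at *
    gcongr
  · simp
  · simp

lemma ff_continuous (a : ℝ) : Continuous (ff a) :=
  continuous_iff_continuousAt.mpr fun y => (ff_hasDerivAt a y).continuousAt

lemma ff_rec (a y : ℝ) : a * ff a y + y * ff (a + 1) y = ff (a - 1) y := by
  rw [← tsum_cf_shift]
  unfold ff
  rw [← tsum_mul_left, ← tsum_mul_left, ← Summable.tsum_add]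
  · congr 1; ext m
    rw [← cf_pred]
    rcases m with _ | m
    · simp; 
    · simp only [Nat.add_sub_cancel]; ring
  · exact (cf_summable a y).mul_left _
  · have hs : Summable fun m : ℕ => cf a m * (m * y ^ (m - 1)) := by
      rw [← summable_nat_add_iff 1]
      refine (cf_summable (a + 1) y).congr ?_
      intro m
      rw [← cf_succ]; push_cast; ring
    exact hs.mul_left _

lemma rpow_ff_hasDerivAt (a y : ℝ) (hy : 0 < y) :
    HasDerivAt (fun z => z ^ a * ff a z) (y ^ (a - 1) * ff (a - 1) y) y := by
  have h := (Real.hasDerivAt_rpow_const (x := y) (p := a) (Or.inl hy.ne')).mul (ff_hasDerivAt a y)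
  refine HasDerivAt.congr_deriv (f := fun z => z ^ a * ff a z) h ?_
  rw [← ff_rec]
  have : y ^ a = y ^ (a - 1) * y := by
    rw [← Real.rpow_add_one hy.ne']; congr 1; ring
  rw [this]; ring

lemma ff_zero (a : ℝ) : ff a 0 = 1 / Real.Gamma (a + 1) := by
  unfold ff
  rw [tsum_eq_single 0]
  · simp [cf]
  · intro m hm; simp [hm]

lemma besselIt_eq (a x : ℝ) : besselIt a x = ff a ((x / 2) ^ 2) := by
  unfold besselIt ff cf
  congr 1; ext m
  rw [pow_mul]; ring

lemma besselI_eq (a x : ℝ) (hx : 0 < x) : besselI a x = (x / 2) ^ a * ff a ((x / 2) ^ 2) := by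
  unfold besselI ff cf
  rw [← tsum_mul_left]
  congr 1; ext m
  rw [Real.rpow_add (by positivity), ← pow_mul, ← Real.rpow_natCast (x / 2) (2 * m)]
  push_cast; ring

/-- complex version -/
noncomputable def ffC (a : ℝ) (w : ℂ) : ℂ := ∑' m : ℕ, (cf a m : ℂ) * w ^ m

lemma ffC_differentiable (a : ℝ) : Differentiable ℂ (ffC a) := by
  intro w
  have := Complex.differentiableOn_tsum_of_summable_norm (U := Metric.ball 0 (‖w‖ + 1))
    (F := fun m w => (cf a m : ℂ) * w ^ m) (cf_abs_summable a (‖w‖ + 1) (by positivity))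
    ?_ Metric.isOpen_ball ?_
  · exact (this w (by simp)).differentiableAt (Metric.isOpen_ball.mem_nhds (by simp))
  · intro m; fun_prop
  · intro m z hz
    simp only [mem_ball, dist_zero_right] at hz
    rw [norm_mul, norm_pow, Complex.norm_real, Real.norm_eq_abs]
    gcongr

lemma ffC_ofReal (a y : ℝ) : ffC a (y : ℂ) = (ff a y : ℂ) := by
  unfold ffC ff
  push_cast
  rfl

lemma cf_nonneg (a : ℝ) (ha : -1 ≤ a) (m : ℕ) : 0 ≤ cf a m := by
  unfold cf
  have := Real.Gamma_nonneg_of_nonneg (s := (m : ℝ) + a + 1)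
    (by have : (0 : ℝ) ≤ m := by positivity
        linarith)
  positivity

lemma ffC_norm_le (a : ℝ) (ha : -1 ≤ a) (w : ℂ) (R : ℝ) (hw : ‖w‖ ≤ R) : ‖ffC a w‖ ≤ ff a R := by
  unfold ffC ff
  apply tsum_of_norm_bounded (cf_summable a R).hasSum
  intro m
  rw [norm_mul, norm_pow, Complex.norm_real, Real.norm_eq_abs, abs_of_nonneg (cf_nonneg a ha m)]
  gcongr
  exact cf_nonneg a ha m

lemma ff_nonneg (a : ℝ) (ha : -1 ≤ a) (y : ℝ) (hy : 0 ≤ y) : 0 ≤ ff a y :=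
  tsum_nonneg fun m => mul_nonneg (cf_nonneg a ha m) (by positivity)

/-! ### The integral `FK β y = ½ ∫ exp(-s-y/s) s^(-β-1) ds` -/

lemma integrable_exp_div (δ p : ℝ) (hδ : 0 < δ) :
    IntegrableOn (fun s : ℝ => rexp (-s - δ / s) * s ^ p) (Ioi 0) := by
  obtain ⟨k, hk⟩ := exists_nat_gt (-p - 1)
  have hg := Real.GammaIntegral_convergent (s := p + k + 1) (by linarith)
  have hg2 := hg.const_mul (k.factorial / δ ^ k)
  refine Integrable.mono' hg2 ?_ ?_
  · apply ContinuousOn.aestronglyMeasurable _ measurableSet_Ioi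
    intro s hs
    have hs' : s ≠ 0 := (mem_Ioi.mp hs).ne'
    apply ContinuousAt.continuousWithinAt
    have : ContinuousAt (fun s : ℝ => s ^ p) s := Real.continuousAt_rpow_const _ _ (Or.inl hs')
    fun_prop (disch := assumption)
  · rw [ae_restrict_iff' measurableSet_Ioi]
    refine Eventually.of_forall fun s hs => ?_
    have hs : 0 < s := hs
    have h1 : rexp (-(δ / s)) ≤ k.factorial / δ ^ k * s ^ k := by
      have := Real.pow_div_factorial_le_exp (δ / s) (by positivity) k
      rw [Real.exp_neg, inv_le_comm₀ (by positivity) (by positivity)]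
      refine le_trans (le_of_eq ?_) this
      rw [div_pow]; field_simp
    rw [Real.norm_eq_abs, abs_of_nonneg (by positivity), sub_eq_add_neg, Real.exp_add]
    calc rexp (-s) * rexp (-(δ / s)) * s ^ p
        ≤ rexp (-s) * (k.factorial / δ ^ k * s ^ k) * s ^ p := by gcongr
      _ = k.factorial / δ ^ k * (rexp (-s) * s ^ (p + k + 1 - 1)) := by
        rw [show p + k + 1 - 1 = p + k by ring, Real.rpow_add_natCast hs.ne']; ring

/-- real -/
noncomputable def FK (β y : ℝ) : ℝ := 1 / 2 * ∫ s in Ioi (0 : ℝ), rexp (-s - y / s) * s ^ (-β - 1)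

/-- complex -/
noncomputable def FKC (β : ℝ) (w : ℂ) : ℂ :=
  1 / 2 * ∫ s in Ioi (0 : ℝ), Complex.exp (-(s : ℂ) - w / s) * ((s ^ (-β - 1) : ℝ) : ℂ)

lemma FKC_ofReal (β y : ℝ) : FKC β (y : ℂ) = (FK β y : ℂ) := by
  unfold FKC FK
  push_cast
  rw [← integral_complex_ofReal]
  push_cast
  rfl

lemma kC_norm (p : ℝ) (w : ℂ) (s : ℝ) (hs : 0 < s) :
    ‖Complex.exp (-(s : ℂ) - w / s) * ((s ^ p : ℝ) : ℂ)‖ = rexp (-s - w.re / s) * s ^ p := by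
  rw [norm_mul, Complex.norm_exp, Complex.norm_real, Real.norm_eq_abs,
    abs_of_nonneg (by positivity)]
  simp

lemma kC_meas (p : ℝ) (w : ℂ) : AEStronglyMeasurable
    (fun s : ℝ => Complex.exp (-(s : ℂ) - w / s) * ((s ^ p : ℝ) : ℂ))
    (volume.restrict (Ioi (0 : ℝ))) := by
  apply ContinuousOn.aestronglyMeasurable _ measurableSet_Ioi
  intro s hs
  have hs' : s ≠ 0 := (mem_Ioi.mp hs).ne'
  have hs2 : (s : ℂ) ≠ 0 := by exact_mod_cast hs'
  apply ContinuousAt.continuousWithinAt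
  have : ContinuousAt (fun s : ℝ => s ^ p) s := Real.continuousAt_rpow_const _ _ (Or.inl hs')
  have h2 : ContinuousAt (fun s : ℝ => ((s ^ p : ℝ) : ℂ)) s :=
    Complex.continuous_ofReal.continuousAt.comp this
  have h3 : ContinuousAt (fun s : ℝ => ((s : ℝ) : ℂ)) s := Complex.continuous_ofReal.continuousAt
  have h4 : ContinuousAt (fun s : ℝ => w / (s : ℂ)) s := continuousAt_const.div h3 hs2
  exact ((h3.neg.sub h4).cexp).mul h2

lemma k_meas (p y : ℝ) : AEStronglyMeasurable
    (fun s : ℝ => rexp (-s - y / s) * s ^ p) (volume.restrict (Ioi (0 : ℝ))) := by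
  apply ContinuousOn.aestronglyMeasurable _ measurableSet_Ioi
  intro s hs
  have hs' : s ≠ 0 := (mem_Ioi.mp hs).ne'
  apply ContinuousAt.continuousWithinAt
  have : ContinuousAt (fun s : ℝ => s ^ p) s := Real.continuousAt_rpow_const _ _ (Or.inl hs')
  fun_prop (disch := assumption)

lemma FKC_hasDerivAt (β : ℝ) (w : ℂ) (hw : 0 < w.re) :
    HasDerivAt (FKC β) (-FKC (β + 1) w) w := by
  have hre : ∀ z ∈ Metric.ball w (w.re / 2), w.re / 2 ≤ z.re := by
    intro z hz
    rw [mem_ball, dist_eq_norm] at hz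
    have := (Complex.abs_re_le_norm (z - w)).trans hz.le
    rw [Complex.sub_re, abs_le] at this
    linarith
  have key := hasDerivAt_integral_of_dominated_loc_of_deriv_le (𝕜 := ℂ) (E := ℂ)
    (μ := volume.restrict (Ioi (0 : ℝ)))
    (F := fun (z : ℂ) (s : ℝ) => Complex.exp (-(s : ℂ) - z / s) * ((s ^ (-β - 1) : ℝ) : ℂ))
    (F' := fun (z : ℂ) (s : ℝ) =>
      -(Complex.exp (-(s : ℂ) - z / s) * ((s ^ (-(β + 1) - 1) : ℝ) : ℂ)))
    (x₀ := w) (s := Metric.ball w (w.re / 2))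
    (bound := fun s => rexp (-s - (w.re / 2) / s) * s ^ (-(β + 1) - 1))
    (Metric.ball_mem_nhds w (by positivity)) ?_ ?_ ?_ ?_ ?_ ?_
  · have := key.2.const_mul (1 / 2 : ℂ)
    refine HasDerivAt.congr_deriv (f := FKC β) this ?_
    rw [integral_neg]
    unfold FKC; ring
  · exact Eventually.of_forall fun z => kC_meas _ z
  · refine Integrable.mono' (integrable_exp_div w.re (-β - 1) hw) (kC_meas _ w) ?_
    rw [ae_restrict_iff' measurableSet_Ioi]
    exact Eventually.of_forall fun s hs => (kC_norm _ w s hs).le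
  · exact (kC_meas _ w).neg
  · rw [ae_restrict_iff' measurableSet_Ioi]
    refine Eventually.of_forall fun s hs z hz => ?_
    have hs : 0 < s := hs
    rw [norm_neg, kC_norm _ z s hs]
    have := hre z hz
    gcongr
  · exact integrable_exp_div _ _ (by positivity)
  · rw [ae_restrict_iff' measurableSet_Ioi]
    refine Eventually.of_forall fun s hs z hz => ?_
    have hs : 0 < s := hs
    have h1 : HasDerivAt (fun z : ℂ => -(s : ℂ) - z / s) (-(1 / s)) z :=
      ((hasDerivAt_id z).div_const (s : ℂ)).const_sub _
    have h2 := h1.cexp.mul_const ((s ^ (-β - 1) : ℝ) : ℂ)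
    refine h2.congr_deriv ?_
    have : s ^ (-β - 1) = s ^ (-(β + 1) - 1) * s := by
      rw [← Real.rpow_add_one hs.ne']; congr 1; ring
    rw [this]
    have hs2 : (s : ℂ) ≠ 0 := by exact_mod_cast hs.ne'
    push_cast
    field_simp

lemma FK_hasDerivAt (β y : ℝ) (hy : 0 < y) : HasDerivAt (FK β) (-FK (β + 1) y) y := by
  have := (FKC_hasDerivAt β (y : ℂ) (by simpa using hy)).real_of_complex
  simp only [FKC_ofReal, Complex.ofReal_re, Complex.neg_re] at this
  exact this

lemma FK_nonneg (β y : ℝ) : 0 ≤ FK β y := by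
  unfold FK
  have : 0 ≤ ∫ s in Ioi (0 : ℝ), rexp (-s - y / s) * s ^ (-β - 1) := by
    apply setIntegral_nonneg measurableSet_Ioi
    intro s hs
    have hs : 0 < s := hs
    positivity
  linarith

lemma FKC_norm_le (β : ℝ) (w : ℂ) (δ : ℝ) (hδ : 0 < δ) (hw : δ ≤ w.re) :
    ‖FKC β w‖ ≤ FK β δ := by
  unfold FKC FK
  rw [norm_mul]
  have : ‖(1 / 2 : ℂ)‖ = 1 / 2 := by norm_num
  rw [this]
  gcongr
  apply norm_integral_le_of_norm_le (integrable_exp_div δ _ hδ)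
  rw [ae_restrict_iff' measurableSet_Ioi]
  refine Eventually.of_forall fun s hs => ?_
  have hs : 0 < s := hs
  rw [kC_norm _ w s hs]
  gcongr

lemma FK_symm (β y : ℝ) (hy : 0 < y) : FK β y = y ^ (-β) * FK (-β) y := by
  unfold FK
  have h1 := integral_comp_mul_left_Ioi (fun s => rexp (-s - y / s) * s ^ (-β - 1)) 0 hy
  have h2 := integral_comp_rpow_Ioi (fun v => (fun s => rexp (-s - y / s) * s ^ (-β - 1)) (y * v))
    (p := -1) (by norm_num)
  rw [← h2] at h1
  simp only [smul_eq_mul, mul_zero] at h1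
  have h3 : ∫ s in Ioi (0 : ℝ), rexp (-s - y / s) * s ^ (-β - 1) =
      y * (y⁻¹ * ∫ s in Ioi (0 : ℝ), rexp (-s - y / s) * s ^ (-β - 1)) := by
    field_simp
  rw [h3, ← h1, mul_left_comm (y ^ (-β))]
  congr 1
  rw [← integral_const_mul, ← integral_const_mul]
  apply setIntegral_congr_fun measurableSet_Ioi
  intro s hs
  have hs : 0 < s := hs
  simp only
  rw [Real.rpow_neg_one, Real.mul_rpow hy.le (by positivity), Real.inv_rpow hs.le,
    ← Real.rpow_neg hs.le]
  have e1 : -(y * s⁻¹) - y / (y * s⁻¹) = -s - y / s := by field_simp; ring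
  have e2 : s ^ (- -β - 1) = s ^ ((-1 : ℝ) - 1) * s ^ (-(-β - 1)) := by
    rw [← Real.rpow_add hs]; congr 1; ring
  have e3 : y ^ (-β) = y * y ^ (-β - 1) := by
    rw [mul_comm, ← Real.rpow_add_one hy.ne']; congr 1; ring
  rw [e1, e2, e3]
  simp only [abs_neg, abs_one]
  ring

lemma FK_continuousOn (b : ℝ) (hb : 0 < b) : ContinuousOn (FK (-b)) (Ici 0) := by
  intro y hy
  have hG := Real.GammaIntegral_convergent hb
  refine ContinuousWithinAt.const_mul ?_ (1 / 2 : ℝ)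
  refine continuousWithinAt_of_dominated (bound := fun s => rexp (-s) * s ^ (b - 1)) ?_ ?_ hG ?_
  · exact Eventually.of_forall fun z => k_meas _ z
  · filter_upwards [self_mem_nhdsWithin] with z hz
    rw [ae_restrict_iff' measurableSet_Ioi]
    refine Eventually.of_forall fun s hs => ?_
    have hs : 0 < s := hs
    have hz : 0 ≤ z := hz
    rw [Real.norm_eq_abs, abs_of_nonneg (by positivity), neg_neg]
    have : 0 ≤ z / s := by positivity
    gcongr
    linarith
  · refine Eventually.of_forall fun s => ?_
    apply Continuous.continuousWithinAt
    fun_prop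

lemma FK_zero (b : ℝ) (hb : 0 < b) : FK (-b) 0 = 1 / 2 * Real.Gamma b := by
  unfold FK
  rw [Real.Gamma_eq_integral hb]
  simp

lemma FK_continuous_param (α y : ℝ) (hy : 0 < y) : ContinuousAt (fun β => FK β y) α := by
  refine ContinuousAt.const_mul ?_ (1 / 2 : ℝ)
  refine continuousAt_of_dominated
    (bound := fun s => rexp (-s - y / s) * s ^ (-α) + rexp (-s - y / s) * s ^ (-α - 2)) ?_ ?_
    ((integrable_exp_div y _ hy).add (integrable_exp_div y _ hy)) ?_
  · exact Eventually.of_forall fun z => k_meas _ y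
  · filter_upwards [Metric.ball_mem_nhds α one_pos] with β hβ
    rw [mem_ball, Real.dist_eq, abs_lt] at hβ
    rw [ae_restrict_iff' measurableSet_Ioi]
    refine Eventually.of_forall fun s hs => ?_
    have hs : 0 < s := hs
    rw [Real.norm_eq_abs, abs_of_nonneg (by positivity), ← mul_add]
    gcongr
    rcases le_total 1 s with h | h
    · have := Real.rpow_le_rpow_of_exponent_le h (show -β - 1 ≤ -α by linarith)
      have : 0 ≤ s ^ (-α - 2) := by positivity
      linarith
    · have := Real.rpow_le_rpow_of_exponent_ge hs h (show -α - 2 ≤ -β - 1 by linarith)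
      have : 0 ≤ s ^ (-α) := by positivity
      linarith
  · rw [ae_restrict_iff' measurableSet_Ioi]
    refine Eventually.of_forall fun s hs => ?_
    have hs : 0 < s := hs
    have : ContinuousAt (fun β : ℝ => s ^ (-β - 1)) α :=
      (Real.continuousAt_const_rpow hs.ne').comp (by fun_prop)
    exact this.const_mul _

/-! ### Identification of `K̃` -/

lemma energy_unique (b : ℝ) (hb0 : 0 < b) (hb1 : b < 1) (u v : ℝ → ℝ)
    (hu : ContinuousOn u (Ici 0)) (hv : ContinuousOn v (Ici 0)) (hu0 : u 0 = 0) (hv0 : v 0 = 0)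
    (hu' : ∀ y, 0 < y → HasDerivAt u (-(y ^ (b - 1) * v y)) y)
    (hv' : ∀ y, 0 < y → HasDerivAt v (-(y ^ (-b) * u y)) y) :
    ∀ y, 0 < y → u y = 0 := by
  set E : ℝ → ℝ := fun y => (u y ^ 2 + v y ^ 2) * rexp (-(y ^ b / b + y ^ (1 - b) / (1 - b))) with hE
  have hder : ∀ y, 0 < y → HasDerivAt E
      (-((u y + v y) ^ 2 * (y ^ (b - 1) + y ^ (-b)) *
        rexp (-(y ^ b / b + y ^ (1 - b) / (1 - b))))) y := by
    intro y hy
    have h1 := Real.hasDerivAt_rpow_const (x := y) (p := b) (Or.inl hy.ne')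
    have h2 := Real.hasDerivAt_rpow_const (x := y) (p := 1 - b) (Or.inl hy.ne')
    have h3 := ((h1.div_const b).add (h2.div_const (1 - b))).neg.exp
    have h4 := (((hu' y hy).pow 2).add ((hv' y hy).pow 2)).mul h3
    refine HasDerivAt.congr_deriv (f := E) h4 ?_
    have : 1 - b ≠ 0 := by linarith
    have e1 : 1 - b - 1 = -b := by ring
    simp only [Pi.add_apply, Pi.neg_apply, Pi.pow_apply, e1]
    field_simp
    ring
  have hanti : AntitoneOn E (Ici 0) := by
    apply antitoneOn_of_deriv_nonpos (convex_Ici 0)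
    · have c1 : ContinuousOn (fun y : ℝ => y ^ b) (Ici 0) :=
        (Real.continuous_rpow_const hb0.le).continuousOn
      have c2 : ContinuousOn (fun y : ℝ => y ^ (1 - b)) (Ici 0) :=
        (Real.continuous_rpow_const (by linarith)).continuousOn
      fun_prop
    · intro y hy
      rw [interior_Ici] at hy
      exact (hder y hy).differentiableAt.differentiableWithinAt
    · intro y hy
      rw [interior_Ici] at hy
      have hy : 0 < y := hy
      rw [(hder y hy).deriv]
      have : 0 ≤ (u y + v y) ^ 2 * (y ^ (b - 1) + y ^ (-b)) *
        rexp (-(y ^ b / b + y ^ (1 - b) / (1 - b))) := by positivity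
      linarith
  intro y hy
  have h := hanti (self_mem_Ici) (mem_Ici.mpr hy.le) hy.le
  have h0 : E 0 = 0 := by simp [hE, hu0, hv0]
  rw [h0] at h
  have h5 : u y ^ 2 + v y ^ 2 ≤ 0 := by
    by_contra hc
    push Not at hc
    have : 0 < E y := mul_pos hc (Real.exp_pos _)
    linarith
  nlinarith [sq_nonneg (u y), sq_nonneg (v y)]

/-- the `K`-combination of series -/
noncomputable def GK (β y : ℝ) : ℝ :=
  π / (2 * Real.sin (β * π)) * (y ^ (-β) * ff (-β) y - ff β y)

lemma GK_hasDerivAt (β y : ℝ) (hy : 0 < y) : HasDerivAt (GK β) (-GK (β + 1) y) y := by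
  have h := ((rpow_ff_hasDerivAt (-β) y hy).sub (ff_hasDerivAt β y)).const_mul
    (π / (2 * Real.sin (β * π)))
  refine HasDerivAt.congr_deriv (f := GK β) h ?_
  unfold GK
  have e1 : (β + 1) * π = β * π + π := by ring
  have e2 : -(β + 1) = -β - 1 := by ring
  rw [e1, Real.sin_add_pi, e2, mul_neg, div_neg]
  ring

lemma GK_symm (β y : ℝ) (hy : 0 < y) : GK β y = y ^ (-β) * GK (-β) y := by
  unfold GK
  have e : y ^ (-β) * y ^ β = 1 := by rw [← Real.rpow_add hy]; simp
  rw [neg_mul, Real.sin_neg, mul_neg, div_neg, neg_neg]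
  linear_combination (π / (2 * Real.sin (β * π)) * ff β y) * e

lemma GK_continuousOn (b : ℝ) (hb : 0 < b) : ContinuousOn (GK (-b)) (Ici 0) := by
  unfold GK
  rw [neg_neg]
  have c1 : ContinuousOn (fun y : ℝ => y ^ b) (Ici 0) :=
    (Real.continuous_rpow_const hb.le).continuousOn
  have c2 := (ff_continuous b).continuousOn (s := Ici 0)
  have c3 := (ff_continuous (-b)).continuousOn (s := Ici 0)
  fun_prop

lemma GK_zero (b : ℝ) (hb : 0 < b) (hb1 : b < 1) : GK (-b) 0 = 1 / 2 * Real.Gamma b := by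
  unfold GK
  rw [neg_neg, Real.zero_rpow hb.ne', zero_mul, ff_zero, neg_mul, Real.sin_neg]
  have h := Real.Gamma_mul_Gamma_one_sub b
  have h1 := Real.Gamma_pos_of_pos (show 0 < 1 - b by linarith)
  have hs : 0 < Real.sin (π * b) :=
    Real.sin_pos_of_pos_of_lt_pi (by positivity) (by nlinarith [Real.pi_pos])
  rw [show -b + 1 = 1 - b by ring, mul_comm b]
  have : Real.Gamma b = π / Real.sin (π * b) / Real.Gamma (1 - b) := by
    rw [← h]; field_simp
  rw [this]
  field_simp
  ring

lemma FK_eq_GK_base (b : ℝ) (hb0 : 0 < b) (hb1 : b < 1) (y : ℝ) (hy : 0 < y) :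
    FK (-b) y = GK (-b) y := by
  have hb2 : 0 < 1 - b := by linarith
  have key := energy_unique b hb0 hb1 (fun y => FK (-b) y - GK (-b) y)
    (fun y => FK (-(1 - b)) y - GK (-(1 - b)) y)
    ((FK_continuousOn b hb0).sub (GK_continuousOn b hb0))
    ((FK_continuousOn (1 - b) hb2).sub (GK_continuousOn (1 - b) hb2))
    (by simp only [FK_zero b hb0, GK_zero b hb0 hb1, sub_self])
    (by simp only [FK_zero (1 - b) hb2, GK_zero (1 - b) hb2 (by linarith), sub_self])
    ?_ ?_ y hy
  · linarith
  · intro y hy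
    refine ((FK_hasDerivAt (-b) y hy).sub (GK_hasDerivAt (-b) y hy)).congr_deriv ?_
    rw [FK_symm (-b + 1) y hy, GK_symm (-b + 1) y hy]
    rw [show -(-b + 1) = b - 1 by ring, show -(1 - b) = b - 1 by ring]
    ring
  · intro y hy
    refine ((FK_hasDerivAt (-(1 - b)) y hy).sub (GK_hasDerivAt (-(1 - b)) y hy)).congr_deriv ?_
    rw [FK_symm (-(1 - b) + 1) y hy, GK_symm (-(1 - b) + 1) y hy]
    rw [show -(-(1 - b) + 1) = - b by ring]
    ring

lemma FK_eq_GK_nat (n : ℕ) : ∀ β : ℝ, (n : ℝ) - 1 < β → β < n → ∀ y, 0 < y → FK β y = GK β y := by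
  induction n with
  | zero =>
    intro β h1 h2 y hy
    simp only [Nat.cast_zero] at h1 h2
    have := FK_eq_GK_base (-β) (by linarith) (by linarith) y hy
    rwa [neg_neg] at this
  | succ n ih =>
    intro β h1 h2 y hy
    push_cast at h1 h2
    have h := ih (β - 1) (by linarith) (by linarith)
    have d1 := FK_hasDerivAt (β - 1) y hy
    have d2 := GK_hasDerivAt (β - 1) y hy
    have he : FK (β - 1) =ᶠ[nhds y] GK (β - 1) := by
      filter_upwards [Ioi_mem_nhds hy] with z hz
      exact h z hz
    have := d1.unique (d2.congr_of_eventuallyEq he)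
    rw [show β - 1 + 1 = β by ring] at this
    linarith

lemma FK_eq_GK (β : ℝ) (h1 : -1 < β) (hn : ∀ k : ℤ, β ≠ k) (y : ℝ) (hy : 0 < y) :
    FK β y = GK β y := by
  apply FK_eq_GK_nat ⌈β⌉₊ β _ _ y hy
  · by_cases h : 0 < β
    · have := Nat.ceil_lt_add_one h.le
      linarith
    · rw [Nat.ceil_eq_zero.mpr (by linarith)]; simpa using h1
  · exact lt_of_le_of_ne (Nat.le_ceil β) (by exact_mod_cast hn ⌈β⌉₊)

lemma besselKt_eq (α : ℝ) (hα : -1 < α) (x : ℝ) (hx : 0 < x) :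
    besselKt α x = FK α ((x / 2) ^ 2) := by
  have hx2 : 0 < x / 2 := by positivity
  have hK : besselK α x = (x / 2) ^ α * FK α ((x / 2) ^ 2) := by
    unfold besselK
    apply Tendsto.limUnder_eq
    have hc : ContinuousAt (fun β => (x / 2) ^ β * FK β ((x / 2) ^ 2)) α :=
      (Real.continuousAt_const_rpow hx2.ne').mul (FK_continuous_param α _ (by positivity))
    refine (hc.tendsto.mono_left nhdsWithin_le_nhds).congr' ?_
    have hI : Ioo ((⌈α⌉ : ℝ) - 1) (⌊α⌋ + 1) ∈ nhdsWithin α {α}ᶜ := by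
      apply mem_nhdsWithin_of_mem_nhds
      apply Ioo_mem_nhds
      · linarith [Int.ceil_lt_add_one α]
      · exact Int.lt_floor_add_one α
    have hI2 : Ioi (-1 : ℝ) ∈ nhdsWithin α {α}ᶜ :=
      mem_nhdsWithin_of_mem_nhds (Ioi_mem_nhds hα)
    filter_upwards [hI, hI2, self_mem_nhdsWithin] with β hβ hβ1 hne
    have hnk : ∀ k : ℤ, β ≠ k := by
      rintro k rfl
      have a1 : ⌈α⌉ ≤ k := by
        have : ⌈α⌉ - 1 < k := by exact_mod_cast hβ.1
        omega
      have a2 : k ≤ ⌊α⌋ := by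
        have : k < ⌊α⌋ + 1 := by exact_mod_cast hβ.2
        omega
      have b1 : α ≤ k := Int.ceil_le.mp a1
      have b2 : (k : ℝ) ≤ α := Int.le_floor.mp a2
      exact hne (le_antisymm b2 b1)
    rw [FK_eq_GK β hβ1 hnk _ (by positivity), besselI_eq _ _ hx, besselI_eq _ _ hx]
    unfold GK
    have e : (x / 2) ^ (-β) = (x / 2) ^ β * ((x / 2) ^ 2) ^ (-β) := by
      rw [← Real.rpow_natCast (x / 2) 2, ← Real.rpow_mul hx2.le, ← Real.rpow_add hx2]
      congr 1; push_cast; ring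
    rw [e]
    ring
  unfold besselKt
  rw [hK, ← mul_assoc, ← Real.rpow_add hx2]
  simp

/-! ### The main integral -/

lemma gauss_int (k : ℕ) (b : ℝ) (hb : 0 < b) :
    IntegrableOn (fun x : ℝ => x ^ (2 * k + 1) * rexp (-b * x ^ 2)) (Ioi 0) ∧
    ∫ x in Ioi (0 : ℝ), x ^ (2 * k + 1) * rexp (-b * x ^ 2) = k.factorial / (2 * b ^ (k + 1)) := by
  have e : ∀ x ∈ Ioi (0 : ℝ), x ^ ((2 * k + 1 : ℕ) : ℝ) * rexp (-b * x ^ (2 : ℝ))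
      = x ^ (2 * k + 1) * rexp (-b * x ^ 2) := by
    intro x hx
    rw [Real.rpow_natCast, Real.rpow_two]
  constructor
  · refine (integrableOn_congr_fun e measurableSet_Ioi).mp ?_
    apply integrableOn_rpow_mul_exp_neg_mul_rpow _ _ hb
    · have : (0 : ℝ) ≤ ((2 * k + 1 : ℕ) : ℝ) := by positivity
      linarith
    · norm_num
  · rw [← setIntegral_congr_fun measurableSet_Ioi e, integral_rpow_mul_exp_neg_mul_rpow (by norm_num)
      (by have : (0 : ℝ) ≤ ((2 * k + 1 : ℕ) : ℝ) := by positivity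
          linarith) hb]
    have e1 : (((2 * k + 1 : ℕ) : ℝ) + 1) / 2 = k + 1 := by push_cast; ring
    have e2 : -(((2 * k + 1 : ℕ) : ℝ) + 1) / 2 = -((k + 1 : ℕ) : ℝ) := by push_cast; ring
    rw [e1, e2, Real.Gamma_nat_eq_factorial, Real.rpow_neg hb.le, Real.rpow_natCast]
    field_simp

lemma J1 (k : ℕ) (A α : ℝ) (hA : 0 < A) (hα : α < k + 1) :
    IntegrableOn (fun x : ℝ => x ^ (2 * k + 1) * FK α (A * (x / 2) ^ 2)) (Ioi 0) ∧
    ∫ x in Ioi (0 : ℝ), x ^ (2 * k + 1) * FK α (A * (x / 2) ^ 2) =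
      4 ^ k * Real.Gamma (k + 1 - α) * k.factorial / A ^ (k + 1) := by
  set f : ℝ → ℝ → ℝ := fun x s =>
    x ^ (2 * k + 1) * (rexp (-s - A * (x / 2) ^ 2 / s) * s ^ (-α - 1)) with hf
  have hfeq : ∀ s : ℝ, 0 < s → ∀ x : ℝ, f x s =
      rexp (-s) * s ^ (-α - 1) * (x ^ (2 * k + 1) * rexp (-(A / (4 * s)) * x ^ 2)) := by
    intro s hs x
    simp only [hf]
    have : -s - A * (x / 2) ^ 2 / s = -s + -(A / (4 * s)) * x ^ 2 := by field_simp; ring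
    rw [this, Real.exp_add]; ring
  have hmeas : AEStronglyMeasurable (Function.uncurry f)
      ((volume.restrict (Ioi (0 : ℝ))).prod (volume.restrict (Ioi (0 : ℝ)))) := by
    apply Measurable.aestronglyMeasurable
    simp only [hf, Function.uncurry_def]
    fun_prop
  have hin : ∀ s : ℝ, 0 < s → ∫ x in Ioi (0 : ℝ), f x s =
      (k.factorial * 4 ^ (k + 1) / (2 * A ^ (k + 1))) * (rexp (-s) * s ^ (k + 1 - α - 1)) := by
    intro s hs
    simp only [hfeq s hs]
    rw [integral_const_mul, (gauss_int k (A / (4 * s)) (by positivity)).2]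
    have : s ^ ((k : ℝ) + 1 - α - 1) = s ^ (-α - 1) * s ^ (k + 1) := by
      rw [← Real.rpow_add_natCast hs.ne']; congr 1; push_cast; ring
    rw [this, div_pow, mul_pow]
    field_simp
  have hG := Real.GammaIntegral_convergent (s := k + 1 - α) (by linarith)
  have hint : Integrable (Function.uncurry f)
      ((volume.restrict (Ioi (0 : ℝ))).prod (volume.restrict (Ioi (0 : ℝ)))) := by
    rw [integrable_prod_iff' hmeas]
    constructor
    · rw [ae_restrict_iff' measurableSet_Ioi]
      refine Eventually.of_forall fun s hs => ?_
      have hs : 0 < s := hs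
      simp only [Function.uncurry_apply_pair, hfeq s hs]
      exact ((gauss_int k (A / (4 * s)) (by positivity)).1).const_mul _
    · refine (integrableOn_congr_fun ?_ measurableSet_Ioi).mp
        (hG.const_mul (k.factorial * 4 ^ (k + 1) / (2 * A ^ (k + 1))))
      intro s hs
      have hs : 0 < s := hs
      simp only [Function.uncurry_apply_pair]
      rw [← hin s hs]
      apply setIntegral_congr_fun measurableSet_Ioi
      intro x hx
      have hx : 0 < x := hx
      simp only [hf]
      rw [Real.norm_eq_abs, abs_of_nonneg (by positivity)]
  have hFK : ∀ x : ℝ, x ^ (2 * k + 1) * FK α (A * (x / 2) ^ 2) =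
      1 / 2 * ∫ s in Ioi (0 : ℝ), f x s := by
    intro x
    simp only [hf, FK]
    rw [integral_const_mul]; ring
  constructor
  · simp only [hFK]
    exact (hint.integral_prod_left).const_mul _
  · simp only [hFK]
    rw [integral_const_mul, integral_integral_swap hint, setIntegral_congr_fun measurableSet_Ioi hin,
      integral_const_mul, ← Real.Gamma_eq_integral (by linarith)]
    rw [pow_succ 4 k]
    field_simp
    ring

lemma J2 (n : ℕ) (A q α : ℝ) (hA : 0 < A) (hq : 0 ≤ q) (hqA : q < A) (hα : α < n + 1) :
    IntegrableOn (fun x : ℝ => x ^ (2 * n + 1) *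
      (ff (n - α) (q * (x / 2) ^ 2) * FK α (A * (x / 2) ^ 2))) (Ioi 0) ∧
    ∫ x in Ioi (0 : ℝ), x ^ (2 * n + 1) *
      (ff (n - α) (q * (x / 2) ^ 2) * FK α (A * (x / 2) ^ 2)) =
      4 ^ n * n.factorial / (A - q) ^ (n + 1) := by
  set F : ℕ → ℝ → ℝ := fun m x => cf (n - α) m * q ^ m * (1 / 4) ^ m *
    (x ^ (2 * (n + m) + 1) * FK α (A * (x / 2) ^ 2)) with hF
  have hα' : ∀ m : ℕ, α < (n + m : ℕ) + 1 := by
    intro m; push_cast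
    have : (0 : ℝ) ≤ m := by positivity
    linarith
  have hcf : ∀ m, 0 ≤ cf (n - α) m := cf_nonneg _ (by linarith)
  have hFi : ∀ m, IntegrableOn (F m) (Ioi 0) := fun m =>
    ((J1 (n + m) A α hA (hα' m)).1).const_mul _
  have hFv : ∀ m, ∫ x in Ioi (0 : ℝ), F m x =
      4 ^ n * n.factorial / A ^ (n + 1) * (((m + n).choose n : ℝ) * (q / A) ^ m) := by
    intro m
    simp only [hF]
    rw [integral_const_mul, (J1 (n + m) A α hA (hα' m)).2]
    unfold cf
    have hg : 0 < Real.Gamma (m + (n - α) + 1) := by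
      apply Real.Gamma_pos_of_pos
      have := hα' m; push_cast at this; linarith
    have e : ((n + m : ℕ) : ℝ) + 1 - α = m + (n - α) + 1 := by push_cast; ring
    have hch : ((m + n).choose n : ℝ) * (m.factorial * n.factorial) = ((n + m).factorial : ℝ) := by
      have := Nat.add_choose_mul_factorial_mul_factorial m n
      rw [add_comm n m, ← this]
      push_cast; ring
    rw [e, ← hch, div_pow, pow_add, pow_add, pow_add, pow_add, div_pow]
    field_simp
    simp
  have hch := hasSum_choose_mul_geometric_of_norm_lt_one (𝕜 := ℝ) n (r := q / A) (by
    rw [Real.norm_eq_abs, abs_of_nonneg (by positivity), div_lt_one hA]; exact hqA)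
  have hnn : ∀ m, ∀ x ∈ Ioi (0 : ℝ), 0 ≤ F m x := by
    intro m x hx
    have hx : 0 < x := hx
    have := hcf m
    have := FK_nonneg α (A * (x / 2) ^ 2)
    positivity
  have hnorm : ∀ m, ∫ x in Ioi (0 : ℝ), ‖F m x‖ = ∫ x in Ioi (0 : ℝ), F m x := by
    intro m
    apply setIntegral_congr_fun measurableSet_Ioi
    intro x hx
    simp only [Real.norm_eq_abs]
    exact abs_of_nonneg (hnn m x hx)
  have hsum : Summable fun m => ∫ x in Ioi (0 : ℝ), ‖F m x‖ := by
    simp only [hnorm, hFv]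
    exact hch.summable.mul_left _
  have hpt : ∀ x, HasSum (fun m => F m x) (x ^ (2 * n + 1) *
      (ff (n - α) (q * (x / 2) ^ 2) * FK α (A * (x / 2) ^ 2))) := by
    intro x
    have h := (cf_summable (n - α) (q * (x / 2) ^ 2)).hasSum
    have h2 := h.mul_left (x ^ (2 * n + 1) * FK α (A * (x / 2) ^ 2))
    have e0 : x ^ (2 * n + 1) * (ff (n - α) (q * (x / 2) ^ 2) * FK α (A * (x / 2) ^ 2)) =
        x ^ (2 * n + 1) * FK α (A * (x / 2) ^ 2) *
          ∑' b, cf (n - α) b * (q * (x / 2) ^ 2) ^ b := by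
      unfold ff; ring
    rw [e0]
    have e3 : (fun m => F m x) = fun m => x ^ (2 * n + 1) * FK α (A * (x / 2) ^ 2) *
        (cf (n - α) m * (q * (x / 2) ^ 2) ^ m) := by
      ext m
      simp only [hF]
      have e1 : (2 * (n + m) + 1) = (2 * n + 1) + 2 * m := by ring
      have e2 : (q * (x / 2) ^ 2) ^ m = q ^ m * (1 / 4) ^ m * x ^ (2 * m) := by
        rw [pow_mul x 2 m, ← mul_pow, ← mul_pow]; congr 1; ring
      rw [e1, e2, pow_add]
      ring
    rw [e3]
    exact h2
  have hts : ∀ x, ∑' m, F m x = x ^ (2 * n + 1) *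
      (ff (n - α) (q * (x / 2) ^ 2) * FK α (A * (x / 2) ^ 2)) := fun x => (hpt x).tsum_eq
  have hval : ∫ x in Ioi (0 : ℝ), x ^ (2 * n + 1) *
      (ff (n - α) (q * (x / 2) ^ 2) * FK α (A * (x / 2) ^ 2)) =
      4 ^ n * n.factorial / (A - q) ^ (n + 1) := by
    have := hasSum_integral_of_summable_integral_norm hFi hsum
    simp only [hts, hFv] at this
    rw [this.unique (hch.mul_left _)]
    have hAq : 0 < A - q := by linarith
    rw [show 1 - q / A = (A - q) / A by field_simp, div_pow]
    field_simp
  refine ⟨?_, hval⟩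
  apply Integrable.of_integral_ne_zero
  rw [hval]
  have hAq : 0 < A - q := by linarith
  positivity

/-! ### Power series in `t` -/

lemma ps_at (a : ℕ → ℝ) (g : ℝ → ℝ) (r : ℝ) (hr : 0 < r)
    (h : ∀ t : ℝ, |t| < r → HasSum (fun j => a j * t ^ j) (g t)) :
    HasFPowerSeriesAt g (FormalMultilinearSeries.ofScalars ℝ a) 0 := by
  rw [hasFPowerSeriesAt_iff]
  filter_upwards [Metric.ball_mem_nhds (0 : ℝ) hr] with z hz
  have := h z (by simpa using hz)
  simpa [FormalMultilinearSeries.coeff_ofScalars, mul_comm] using this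

lemma ps_coeff (a : ℕ → ℝ) (g : ℝ → ℝ) (r : ℝ) (hr : 0 < r)
    (h : ∀ t : ℝ, |t| < r → HasSum (fun j => a j * t ^ j) (g t)) (j : ℕ) :
    iteratedDeriv j g 0 / j.factorial = a j := by
  have h1 := ps_at a g r hr h
  have h2 := (h1.analyticAt).hasFPowerSeriesAt
  have := h2.eq_formalMultilinearSeries h1
  have h3 := congrArg (fun p => FormalMultilinearSeries.coeff p j) this
  simpa [FormalMultilinearSeries.coeff_ofScalars] using h3

lemma ps_tendsto (a : ℕ → ℝ) (g : ℝ → ℝ) (r : ℝ) (hr : 0 < r)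
    (h : ∀ t : ℝ, |t| < r → HasSum (fun j => a j * t ^ j) (g t)) (j : ℕ) :
    Tendsto (fun k : ℕ => (g (r / (k + 2)) - ∑ i ∈ Finset.range j, a i * (r / ((k : ℝ) + 2)) ^ i) /
      (r / ((k : ℝ) + 2)) ^ j) atTop (nhds (a j)) := by
  have hne : ∀ t : ℝ, |t| < r → t ≠ 0 →
      HasSum (fun k => a (k + j) * t ^ k) ((g t - ∑ i ∈ Finset.range j, a i * t ^ i) / t ^ j) := by
    intro t ht h0
    have h1 := ((hasSum_nat_add_iff' (f := fun j => a j * t ^ j) j).mpr (h t ht)).div_const (t ^ j)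
    have e : (fun k => a (k + j) * t ^ k) = fun k => a (k + j) * t ^ (k + j) / t ^ j := by
      ext k; rw [pow_add]; field_simp
    rw [e]; exact h1
  have hps : ∀ t : ℝ, |t| < r →
      HasSum (fun k => a (k + j) * t ^ k) (∑' k, a (k + j) * t ^ k) := by
    intro t ht
    apply Summable.hasSum
    by_cases h0 : t = 0
    · subst h0
      apply summable_of_ne_finset_zero (s := {0})
      intro b hb
      simp only [Finset.mem_singleton] at hb
      simp [hb]
    · exact (hne t ht h0).summable
  have hc := (ps_at (fun k => a (k + j)) (fun t => ∑' k, a (k + j) * t ^ k) r hr hps).continuousAt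
  have h0 : (∑' k, a (k + j) * (0 : ℝ) ^ k) = a j := by
    rw [tsum_eq_single 0]
    · simp
    · intro b hb; simp [hb]
  have htk : Tendsto (fun k : ℕ => r / ((k : ℝ) + 2)) atTop (nhds 0) := by
    apply Tendsto.const_div_atTop
    exact (tendsto_natCast_atTop_atTop (R := ℝ)).atTop_add (tendsto_const_nhds (x := (2 : ℝ)))
  have hcomp := hc.tendsto.comp htk
  simp only [h0] at hcomp
  refine hcomp.congr fun k => ?_
  have hk : 0 < r / ((k : ℝ) + 2) := by positivity
  have hk2 : |r / ((k : ℝ) + 2)| < r := by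
    rw [abs_of_pos hk, div_lt_iff₀ (by positivity)]
    have : (0 : ℝ) ≤ k := by positivity
    nlinarith
  exact (hne _ hk2 hk.ne').tsum_eq

lemma ps_meas (a : ℕ → ℝ → ℝ) (G : ℝ → ℝ → ℝ) (m : Measure ℝ) (r : ℝ) (hr : 0 < r)
    (hG : ∀ t : ℝ, |t| < r → AEStronglyMeasurable (G t) m)
    (h : ∀ᵐ x ∂m, ∀ t : ℝ, |t| < r → HasSum (fun j => a j x * t ^ j) (G t x)) (j : ℕ) :
    AEStronglyMeasurable (a j) m := by
  induction j using Nat.strong_induction_on with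
  | _ j ih =>
    refine aestronglyMeasurable_of_tendsto_ae atTop
      (f := fun (k : ℕ) x => (G (r / (k + 2)) x -
        ∑ i ∈ Finset.range j, a i x * (r / ((k : ℝ) + 2)) ^ i) / (r / ((k : ℝ) + 2)) ^ j) ?_ ?_
    · intro k
      have hk : 0 < r / ((k : ℝ) + 2) := by positivity
      have hk2 : |r / ((k : ℝ) + 2)| < r := by
        rw [abs_of_pos hk, div_lt_iff₀ (by positivity)]
        have : (0 : ℝ) ≤ k := by positivity
        nlinarith
      have h1 : AEStronglyMeasurable
          (fun x => ∑ i ∈ Finset.range j, a i x * (r / ((k : ℝ) + 2)) ^ i) m := by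
        apply Finset.aestronglyMeasurable_fun_sum
        intro i hi
        exact (ih i (Finset.mem_range.mp hi)).mul_const _
      have := ((hG _ hk2).sub h1).mul_const ((r / ((k : ℝ) + 2)) ^ j)⁻¹
      simpa [div_eq_mul_inv] using this
    · filter_upwards [h] with x hx
      exact ps_tendsto (fun j => a j x) (fun t => G t x) r hr hx j

/-- complex generating function -/
noncomputable def GC (n : ℕ) (α x : ℝ) (t : ℂ) : ℂ :=
  ((1 - t) ^ (n + 1))⁻¹ * ffC (n - α) ((t / (1 - t)) ^ 2 * (((x / 2) ^ 2 : ℝ) : ℂ)) *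
    FKC α ((1 / (1 - t)) ^ 2 * (((x / 2) ^ 2 : ℝ) : ℂ))

/-- real generating function -/
noncomputable def GR (n : ℕ) (α x t : ℝ) : ℝ :=
  ((1 - t) ^ (n + 1))⁻¹ * ff (n - α) ((t / (1 - t)) ^ 2 * (x / 2) ^ 2) *
    FK α ((1 / (1 - t)) ^ 2 * (x / 2) ^ 2)

/-- bound -/
noncomputable def BB (n : ℕ) (α x : ℝ) : ℝ :=
  (8 / 7) ^ (n + 1) * (ff (n - α) (1 / 49 * (x / 2) ^ 2) * FK α (1 / 2 * (x / 2) ^ 2))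

lemma GC_ofReal (n : ℕ) (α x t : ℝ) : GC n α x (t : ℂ) = (GR n α x t : ℂ) := by
  unfold GC GR
  push_cast
  rw [← ffC_ofReal, ← FKC_ofReal]
  push_cast
  rfl

lemma t_bounds (t : ℂ) (ht : ‖t‖ < 1 / 8) : 1 - t ≠ 0 ∧ ‖(1 - t)⁻¹‖ ≤ 8 / 7 ∧
    ‖t / (1 - t)‖ ≤ 1 / 7 ∧ 1 / 2 ≤ ((1 / (1 - t)) ^ 2).re := by
  have h1 : 7 / 8 ≤ ‖1 - t‖ := by
    have := norm_sub_norm_le (1 : ℂ) t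
    rw [norm_one] at this
    linarith
  have hne : 1 - t ≠ 0 := by
    intro h; rw [h, norm_zero] at h1; linarith
  have h2 : ‖(1 - t)⁻¹‖ ≤ 8 / 7 := by
    rw [norm_inv, inv_le_comm₀ (by linarith) (by norm_num)]
    norm_num; linarith
  have h3 : ‖t / (1 - t)‖ ≤ 1 / 7 := by
    rw [norm_div, div_le_iff₀ (by linarith)]; linarith
  refine ⟨hne, h2, h3, ?_⟩
  set u := t / (1 - t) with hu
  have e : (1 / (1 - t)) ^ 2 = 1 + (2 * u + u ^ 2) := by
    rw [hu]; field_simp; ring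
  rw [e, Complex.add_re, Complex.one_re]
  have h4 : ‖2 * u + u ^ 2‖ ≤ 2 * (1 / 7) + (1 / 7) ^ 2 := by
    refine (norm_add_le _ _).trans ?_
    rw [norm_mul, norm_pow, Complex.norm_two]
    gcongr
  have h5 := (abs_le.mp ((Complex.abs_re_le_norm _).trans h4)).1
  have h6 : (2 * (1 / 7) + (1 / 7) ^ 2 : ℝ) = 15 / 49 := by norm_num
  rw [h6] at h5
  linarith

lemma re_mul_ofReal' (w : ℂ) (c : ℝ) : (w * (c : ℂ)).re = w.re * c := by simp

lemma GC_differentiableOn (n : ℕ) (α x : ℝ) (hx : 0 < x) :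
    DifferentiableOn ℂ (GC n α x) (Metric.ball 0 (1 / 8)) := by
  intro t ht
  simp only [mem_ball, dist_zero_right] at ht
  obtain ⟨hne, -, -, hre⟩ := t_bounds t ht
  apply DifferentiableAt.differentiableWithinAt
  have d0 : DifferentiableAt ℂ (fun t : ℂ => ((1 - t) ^ (n + 1))⁻¹) t :=
    DifferentiableAt.inv (by fun_prop) (pow_ne_zero _ hne)
  have d1 : DifferentiableAt ℂ (fun t : ℂ => (t / (1 - t)) ^ 2 * (((x / 2) ^ 2 : ℝ) : ℂ)) t := by
    fun_prop (disch := assumption)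
  have d2 : DifferentiableAt ℂ (fun t : ℂ => (1 / (1 - t)) ^ 2 * (((x / 2) ^ 2 : ℝ) : ℂ)) t := by
    fun_prop (disch := assumption)
  have d3 := ((ffC_differentiable (n - α)).differentiableAt).comp t d1
  have d4 := ((FKC_hasDerivAt α ((1 / (1 - t)) ^ 2 * (((x / 2) ^ 2 : ℝ) : ℂ)) (by
    rw [re_mul_ofReal']; positivity)).differentiableAt).comp t d2
  exact (d0.mul d3).mul d4

lemma GC_norm_le (n : ℕ) (α x : ℝ) (hα : α < n + 1) (hx : 0 < x) (t : ℂ) (ht : ‖t‖ < 1 / 8) :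
    ‖GC n α x t‖ ≤ BB n α x := by
  obtain ⟨hne, h1, h2, h3⟩ := t_bounds t ht
  unfold GC BB
  have hxp : 0 < (x / 2) ^ 2 := by positivity
  rw [norm_mul, norm_mul, mul_assoc]
  have hA : ‖((1 - t) ^ (n + 1))⁻¹‖ ≤ (8 / 7) ^ (n + 1) := by
    rw [← inv_pow, norm_pow]
    gcongr
  have hff : 0 ≤ ff (n - α) (1 / 49 * (x / 2) ^ 2) := ff_nonneg _ (by linarith) _ (by positivity)
  refine mul_le_mul hA (mul_le_mul ?_ ?_ (norm_nonneg _) hff) (by positivity) (by positivity)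
  · apply ffC_norm_le _ (by linarith)
    rw [norm_mul, norm_pow, Complex.norm_real, Real.norm_eq_abs, abs_of_pos hxp]
    gcongr
    calc ‖t / (1 - t)‖ ^ 2 ≤ (1 / 7) ^ 2 := by gcongr
      _ = 1 / 49 := by norm_num
  · apply FKC_norm_le _ _ _ (by positivity)
    rw [re_mul_ofReal']
    gcongr

/-- Taylor coefficients -/
noncomputable def LL (n : ℕ) (α : ℝ) (j : ℕ) (x : ℝ) : ℝ :=
  (iteratedDeriv j (GC n α x) 0 / j.factorial).re

lemma LL_hasSum (n : ℕ) (α x : ℝ) (hx : 0 < x) (t : ℝ) (ht : |t| < 1 / 8) :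
    HasSum (fun j => LL n α j x * t ^ j) (GR n α x t) := by
  have h := Complex.hasSum_taylorSeries_on_ball (GC_differentiableOn n α x hx)
    (z := (t : ℂ)) (by simpa using ht)
  have h2 := Complex.hasSum_re h
  rw [GC_ofReal, Complex.ofReal_re] at h2
  have e : (fun j => LL n α j x * t ^ j) = fun j : ℕ => (((j.factorial : ℂ)⁻¹ •
      ((t : ℂ) - 0) ^ j • iteratedDeriv j (GC n α x) 0)).re := by
    ext j
    unfold LL
    rw [← re_mul_ofReal']
    congr 1
    simp only [smul_eq_mul, sub_zero]
    push_cast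
    ring
  rw [e]
  exact h2

lemma LL_bound (n : ℕ) (α x : ℝ) (hα : α < n + 1) (hx : 0 < x) (j : ℕ) :
    |LL n α j x| ≤ 16 ^ j * BB n α x := by
  have hd : DiffContOnCl ℂ (GC n α x) (Metric.ball 0 (1 / 16)) := by
    apply DifferentiableOn.diffContOnCl
    apply (GC_differentiableOn n α x hx).mono
    refine (Metric.closure_ball_subset_closedBall).trans ?_
    exact Metric.closedBall_subset_ball (by norm_num)
  have h := Complex.norm_iteratedDeriv_le_of_forall_mem_sphere_norm_le (C := BB n α x) j
    (by norm_num) hd (by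
      intro z hz
      apply GC_norm_le n α x hα hx
      rw [mem_sphere, dist_zero_right] at hz
      rw [hz]; norm_num)
  unfold LL
  refine (Complex.abs_re_le_norm _).trans ?_
  rw [norm_div, Complex.norm_natCast, div_le_iff₀ (by positivity)]
  refine h.trans (le_of_eq ?_)
  rw [one_div, inv_pow]
  field_simp

lemma GR_meas (n : ℕ) (α t : ℝ) (ht : |t| < 1 / 8) :
    AEStronglyMeasurable (fun x => GR n α x t) (volume.restrict (Ioi (0 : ℝ))) := by
  apply ContinuousOn.aestronglyMeasurable _ measurableSet_Ioi
  intro x hx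
  have hx : 0 < x := hx
  rw [abs_lt] at ht
  have h1 : 0 < 1 - t := by linarith
  apply ContinuousAt.continuousWithinAt
  have c1 : ContinuousAt (fun x => ff (n - α) ((t / (1 - t)) ^ 2 * (x / 2) ^ 2)) x :=
    ((ff_continuous (n - α)).comp (by fun_prop)).continuousAt
  have c2 : ContinuousAt (fun x => FK α ((1 / (1 - t)) ^ 2 * (x / 2) ^ 2)) x :=
    ContinuousAt.comp (f := fun x => (1 / (1 - t)) ^ 2 * (x / 2) ^ 2) (g := FK α)
      (FK_hasDerivAt α _ (by positivity)).continuousAt (by fun_prop)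
  exact (c1.const_mul _).mul c2

lemma GR_int (n : ℕ) (α t : ℝ) (hα : α < n + 1) (ht : |t| < 1 / 8) :
    ∫ x in Ioi (0 : ℝ), GR n α x t * x ^ (2 * n + 1) = 4 ^ n * n.factorial / (1 + t) ^ (n + 1) := by
  rw [abs_lt] at ht
  have h1 : 0 < 1 - t := by linarith
  have h2 : 0 < 1 + t := by linarith
  have hlt : (t / (1 - t)) ^ 2 < (1 / (1 - t)) ^ 2 := by
    rw [div_pow, div_pow]
    apply div_lt_div_of_pos_right _ (by positivity)
    nlinarith
  have h := (J2 n ((1 / (1 - t)) ^ 2) ((t / (1 - t)) ^ 2) α (by positivity) (by positivity) hlt hα).2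
  have e : ∀ x, GR n α x t * x ^ (2 * n + 1) = ((1 - t) ^ (n + 1))⁻¹ * (x ^ (2 * n + 1) *
      (ff (n - α) ((t / (1 - t)) ^ 2 * (x / 2) ^ 2) * FK α ((1 / (1 - t)) ^ 2 * (x / 2) ^ 2))) := by
    intro x; unfold GR; ring
  simp only [e]
  rw [integral_const_mul, h]
  have e2 : (1 / (1 - t)) ^ 2 - (t / (1 - t)) ^ 2 = (1 + t) / (1 - t) := by
    field_simp; ring
  rw [e2, div_pow]
  field_simp

lemma LL_main (n : ℕ) (α : ℝ) (hα : α < n + 1) (j : ℕ) :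
    IntegrableOn (fun x => LL n α j x * x ^ (2 * n + 1)) (Ioi 0) ∧
    ∫ x in Ioi (0 : ℝ), LL n α j x * x ^ (2 * n + 1) =
      (-1) ^ j * 4 ^ n * (j + n).factorial / j.factorial := by
  have hmeas : ∀ j, AEStronglyMeasurable (LL n α j) (volume.restrict (Ioi (0 : ℝ))) := by
    apply ps_meas (LL n α) (fun t x => GR n α x t) _ (1 / 8) (by norm_num) (GR_meas n α)
    rw [ae_restrict_iff' measurableSet_Ioi]
    exact Eventually.of_forall fun x hx t ht => LL_hasSum n α x hx t ht
  have hB : IntegrableOn (fun x => BB n α x * x ^ (2 * n + 1)) (Ioi 0) := by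
    have := (J2 n (1 / 2) (1 / 49) α (by norm_num) (by norm_num) (by norm_num) hα).1.const_mul
      ((8 / 7) ^ (n + 1))
    refine this.congr (Eventually.of_forall fun x => ?_)
    simp only [BB]; ring
  have hle : ∀ j, ∀ x ∈ Ioi (0 : ℝ), ‖LL n α j x * x ^ (2 * n + 1)‖ ≤
      16 ^ j * (BB n α x * x ^ (2 * n + 1)) := by
    intro j x hx
    have hx : 0 < x := hx
    rw [norm_mul, Real.norm_eq_abs, Real.norm_eq_abs, abs_of_pos (by positivity : 0 < x ^ (2 * n + 1)),
      ← mul_assoc]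
    gcongr
    exact LL_bound n α x hα hx j
  have hint : ∀ j, IntegrableOn (fun x => LL n α j x * x ^ (2 * n + 1)) (Ioi 0) := by
    intro j
    refine Integrable.mono' (hB.const_mul (16 ^ j)) ?_ ?_
    · exact (hmeas j).mul (by fun_prop)
    · rw [ae_restrict_iff' measurableSet_Ioi]
      exact Eventually.of_forall (hle j)
  refine ⟨hint j, ?_⟩
  set I : ℕ → ℝ := fun j => ∫ x in Ioi (0 : ℝ), LL n α j x * x ^ (2 * n + 1) with hI
  set S : ℝ := ∫ x in Ioi (0 : ℝ), BB n α x * x ^ (2 * n + 1)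
  have hs1 : ∀ t : ℝ, |t| < 1 / 16 →
      HasSum (fun j => I j * t ^ j) (4 ^ n * n.factorial / (1 + t) ^ (n + 1)) := by
    intro t ht
    have ht8 : |t| < 1 / 8 := by linarith
    have hFi : ∀ j, IntegrableOn (fun x => LL n α j x * x ^ (2 * n + 1) * t ^ j) (Ioi 0) :=
      fun j => (hint j).mul_const _
    have hsum : Summable fun j => ∫ x in Ioi (0 : ℝ), ‖LL n α j x * x ^ (2 * n + 1) * t ^ j‖ := by
      apply Summable.of_nonneg_of_le (f := fun j : ℕ => (16 * |t|) ^ j * S)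
      · intro j; exact integral_nonneg fun x => norm_nonneg _
      · intro j
        simp only [norm_mul _ (t ^ j)]
        rw [integral_mul_const, mul_pow, norm_pow, Real.norm_eq_abs, mul_right_comm]
        gcongr
        rw [← integral_const_mul]
        exact setIntegral_mono_on (hint j).norm (hB.const_mul _) measurableSet_Ioi (hle j)
      · apply Summable.mul_right
        exact summable_geometric_of_lt_one (by positivity) (by linarith)
    have h := hasSum_integral_of_summable_integral_norm hFi hsum
    have hts : ∫ x in Ioi (0 : ℝ), ∑' j, LL n α j x * x ^ (2 * n + 1) * t ^ j =
        4 ^ n * n.factorial / (1 + t) ^ (n + 1) := by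
      rw [← GR_int n α t hα ht8]
      apply setIntegral_congr_fun measurableSet_Ioi
      intro x hx
      have := (LL_hasSum n α x hx t ht8).mul_right (x ^ (2 * n + 1))
      simp only
      rw [← this.tsum_eq]
      congr 1; ext j; ring
    rw [hts] at h
    simpa only [integral_mul_const] using h
  have hs2 : ∀ t : ℝ, |t| < 1 / 16 →
      HasSum (fun j : ℕ => (4 ^ n * n.factorial * ((j + n).choose n : ℝ) * (-1) ^ j) * t ^ j)
        (4 ^ n * n.factorial / (1 + t) ^ (n + 1)) := by
    intro t ht
    have h := (hasSum_choose_mul_geometric_of_norm_lt_one (𝕜 := ℝ) n (r := -t) (by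
      rw [norm_neg, Real.norm_eq_abs]; linarith)).mul_left (4 ^ n * (n.factorial : ℝ))
    have e : (fun j : ℕ => (4 ^ n * n.factorial * ((j + n).choose n : ℝ) * (-1) ^ j) * t ^ j) =
        fun j : ℕ => 4 ^ n * (n.factorial : ℝ) * (((j + n).choose n : ℝ) * (-t) ^ j) := by
      ext j; rw [neg_pow t]; ring
    rw [e, show 1 + t = 1 - -t by ring, ← mul_one_div]
    exact h
  have h1 := ps_coeff _ _ _ (by norm_num) hs1 j
  have h2 := ps_coeff _ _ _ (by norm_num) hs2 j
  have h3 : I j = 4 ^ n * n.factorial * ((j + n).choose n : ℝ) * (-1) ^ j := h1.symm.trans h2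
  rw [show ∫ x in Ioi (0 : ℝ), LL n α j x * x ^ (2 * n + 1) = I j from rfl, h3]
  have hch : ((j + n).choose n : ℝ) * j.factorial * n.factorial = ((j + n).factorial : ℝ) := by
    exact_mod_cast Nat.add_choose_mul_factorial_mul_factorial j n
  rw [← hch]
  field_simp

lemma genFun_eq (n : ℕ) (μ ν t x : ℝ) (hn : μ + ν = 2 * n) (hν : -1 ≤ ν) (ht : |t| < 1 / 8)
    (hx : 0 < x) : genFun μ ν t x = GR n (ν / 2) x t := by
  rw [abs_lt] at ht
  have h1 : 0 < 1 - t := by linarith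
  unfold genFun GR
  have hμ : μ / 2 = n - ν / 2 := by linarith
  rw [besselIt_eq, besselKt_eq _ (by linarith) _ (by positivity), hμ]
  have e1 : -(μ + ν + 2) / 2 = -((n + 1 : ℕ) : ℝ) := by rw [hn]; push_cast; ring
  rw [e1, Real.rpow_neg h1.le, Real.rpow_natCast]
  have e2 : (t * x / (1 - t) / 2) ^ 2 = (t / (1 - t)) ^ 2 * (x / 2) ^ 2 := by ring
  have e3 : (x / (1 - t) / 2) ^ 2 = (1 / (1 - t)) ^ 2 * (x / 2) ^ 2 := by ring
  rw [e2, e3]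

lemma LambdaF_eq (n : ℕ) (μ ν x : ℝ) (hn : μ + ν = 2 * n) (hν : -1 ≤ ν) (hx : 0 < x) (j : ℕ) :
    LambdaF μ ν j x = LL n (ν / 2) j x := by
  unfold LambdaF
  apply ps_coeff (fun j => LL n (ν / 2) j x) _ (1 / 8) (by norm_num)
  intro t ht
  rw [genFun_eq n μ ν t x hn hν ht hx]
  exact LL_hasSum n (ν / 2) x hx t ht


/-- **Lemma 3.2.** `Λ_j^{μ,ν} ∈ L¹(ℝ_+, x^{μ+ν+1}dx)` and
`∫₀^∞ Λ_j^{μ,ν}(x) x^{μ+ν+1} dx = (−1)^j 2^{μ+ν} Γ(j+(μ+ν+2)/2)/j!`. -/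
theorem lambda_L1_integral (μ ν : ℤ) (hcond : IntCond μ ν) (j : ℕ) :
    MeasureTheory.IntegrableOn
        (fun x => LambdaF μ ν j x * x ^ ((μ : ℝ) + ν + 1)) (Set.Ioi 0)
      ∧ ∫ x in Set.Ioi (0 : ℝ), LambdaF μ ν j x * x ^ ((μ : ℝ) + ν + 1)
        = (-1) ^ j * (2 : ℝ) ^ ((μ : ℝ) + ν) * Real.Gamma (j + ((μ : ℝ) + ν + 2) / 2)
            / j.factorial := by
  obtain ⟨h1, h2, ⟨k, hk⟩, h4⟩ := hcond
  obtain ⟨n, hn⟩ : ∃ n : ℕ, μ + ν = 2 * n := by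
    refine ⟨(k + ν).toNat, ?_⟩
    have : 0 ≤ k + ν := by
      by_contra hc
      apply h4
      constructor <;> omega
    omega
  have hn' : (μ : ℝ) + ν = 2 * n := by exact_mod_cast hn
  have hν : (-1 : ℝ) ≤ ν := by exact_mod_cast h1
  have hμ : (-1 : ℝ) ≤ μ := by exact_mod_cast h1.trans h2
  have hmain := LL_main n ((ν : ℝ) / 2) (by linarith) j
  have e : ∀ x ∈ Set.Ioi (0 : ℝ), LL n ((ν : ℝ) / 2) j x * x ^ (2 * n + 1) =
      LambdaF μ ν j x * x ^ ((μ : ℝ) + ν + 1) := by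
    intro x hx
    rw [LambdaF_eq n μ ν x hn' hν hx j, hn']
    congr 1
    rw [← Real.rpow_natCast]
    congr 1
    push_cast; ring
  refine ⟨(integrableOn_congr_fun e measurableSet_Ioi).mp hmain.1, ?_⟩
  rw [← setIntegral_congr_fun measurableSet_Ioi e, hmain.2, hn']
  have e1 : (j : ℝ) + (2 * n + 2) / 2 = ((j + n : ℕ) : ℝ) + 1 := by push_cast; ring
  have e2 : (2 : ℝ) ^ (2 * (n : ℝ)) = 4 ^ n := by
    rw [Real.rpow_mul (by norm_num), Real.rpow_natCast]; norm_num
  rw [e1, Real.Gamma_nat_eq_factorial, e2]
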